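/- Let d ≥ 1 and let Φ : ℝ^d → ℝ^d be a C¹ diffeomorphism that preserves Lebesgue measure and satisfies sup_ξ ‖DΦ(ξ)‖ ≤ M for some M ≥ 1. Then for every Schwartz function g : ℝ^d → ℝ: (i) for 0 < r < 1, the homogeneous Hölder seminorms satisfy {g∘Φ}_r ≤ M^r · {g}_r; (ii) for 0 < r < 1 and 2 ≤ p < ∞, there is a constant C = C(d, r, p), independent of Φ, M and g, with [g∘Φ]_{r,p} ≤ C · M^r · [g]_{r,p} (Gagliardo seminorms); (iii) for 0 ≤ θ ≤ 1, there is a constant C = C(d, θ), independent of Φ, M and g, with [g∘Φ]_θ ≤ C · M^θ · [g]_θ (homogeneous Sobolev seminorms). -/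

import Mathlib

open MeasureTheory ENNReal
open scoped RealInnerProductSpace

noncomputable section

/-- Shorthand for Euclidean space `ℝ^d`. -/
abbrev Ed (d : ℕ) := EuclideanSpace ℝ (Fin d)

/-- The homogeneous Besov (Gagliardo) seminorm `[f]_{r,p}`. -/
def gagliardo (d : ℕ) (r p : ℝ) {F : Type*} [NormedAddCommGroup F] (f : Ed d → F) : ℝ≥0∞ :=
  (∫⁻ x, ∫⁻ y, (‖f x - f y‖₊ : ℝ≥0∞) ^ p / (‖x - y‖₊ : ℝ≥0∞) ^ (r * p + d)) ^ (1 / p)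

/-- The homogeneous Hölder seminorm `{f}_r`. -/
def holderSemi (d : ℕ) (r : ℝ) {F : Type*} [NormedAddCommGroup F] (f : Ed d → F) : ℝ≥0∞ :=
  ⨆ x, ⨆ y, (‖f x - f y‖₊ : ℝ≥0∞) / (‖x - y‖₊ : ℝ≥0∞) ^ r

/-- The Fourier transform `f̂(κ) = ∫ e^{-i x·κ} f(x) dx`. -/
def ftransform (d : ℕ) (f : Ed d → ℂ) (κ : Ed d) : ℂ :=
  ∫ x, Complex.exp (-(Complex.I * (⟪x, κ⟫ : ℂ))) * f x

/-- The homogeneous Sobolev seminorm `[f]_θ = ((2π)^{-d} ∫ |κ|^{2θ} |f̂(κ)|² dκ)^{1/2}`. -/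
def sobolevSemi (d : ℕ) (θ : ℝ) (f : Ed d → ℂ) : ℝ≥0∞ :=
  (ENNReal.ofReal ((2 * Real.pi) ^ (-(d : ℝ))) *
    ∫⁻ κ, (‖κ‖₊ : ℝ≥0∞) ^ (2 * θ) * (‖ftransform d f κ‖₊ : ℝ≥0∞) ^ (2 : ℕ)) ^ ((1 : ℝ) / 2)

/-- A symbol of class `S⁰_{ph}`: smooth away from the origin and positively
homogeneous of degree `0`. -/
def IsSymbol0 (d : ℕ) (a : Ed d → ℂ) : Prop :=
  ContDiffOn ℝ (⊤ : ℕ∞) a {0}ᶜ ∧ ∀ (c : ℝ) (κ : Ed d), 0 < c → κ ≠ 0 → a (c • κ) = a κ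

/-- The operator `𝔞[f](x) = (2π)^{-d} ∫ e^{i x·κ} a(κ) f̂(κ) dκ` associated with a symbol. -/
def symbOp (d : ℕ) (a : Ed d → ℂ) (f : Ed d → ℂ) (x : Ed d) : ℂ :=
  (((2 * Real.pi) ^ (-(d : ℝ)) : ℝ) : ℂ) *
    ∫ κ, Complex.exp (Complex.I * (⟪x, κ⟫ : ℂ)) * a κ * ftransform d f κ

/-- The partial derivative `∂_i f(x)`. -/
def pd (d : ℕ) (i : Fin d) (f : Ed d → ℝ) (x : Ed d) : ℝ :=
  fderiv ℝ f x (EuclideanSpace.single i 1)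

/-- The half-wave propagator `(e^{itD} g)(x) = (2π)^{-d} ∫ e^{i x·κ} e^{i t|κ|} ĝ(κ) dκ`. -/
def halfWave (d : ℕ) (t : ℝ) (g : Ed d → ℂ) (x : Ed d) : ℂ :=
  (((2 * Real.pi) ^ (-(d : ℝ)) : ℝ) : ℂ) *
    ∫ κ, Complex.exp (Complex.I * ((⟪x, κ⟫ : ℂ) + (t : ℂ) * ((‖κ‖ : ℝ) : ℂ))) *
      ftransform d g κ

end

/-- A `C¹` diffeomorphism of `ℝ^d` preserving Lebesgue measure, with derivative bounded by
`M ≥ 1` in operator norm. -/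
def IsMPDiffeo (d : ℕ) (Φ : Ed d → Ed d) (M : ℝ) : Prop :=
  ContDiff ℝ 1 Φ ∧
  (∃ Ψ : Ed d → Ed d, ContDiff ℝ 1 Ψ ∧
    Function.LeftInverse Ψ Φ ∧ Function.RightInverse Ψ Φ) ∧
  MeasureTheory.Measure.map Φ MeasureTheory.volume = MeasureTheory.volume ∧
  1 ≤ M ∧ ∀ ξ, ‖fderiv ℝ Φ ξ‖ ≤ M

/-!
Let `Φ` be measure preserving and `K`-Lipschitz. For `y` in the ball of radius `K * ‖h‖` around
`Φ x`, both `Φ x` and `Φ (x + h)` lie within `2 * K * ‖h‖` of `y`, and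
`‖f (Φ (x + h)) - f (Φ x)‖ ^ p` is at most `2 ^ (p - 1)` times the sum of the `p`-th powers of the
two increments through `f y`. Averaging over `y` and integrating over `x`, where `Φ` disappears by
measure preservation, bounds the `L^p` increment of `f ∘ Φ` at `h` by the average of the `L^p`
increments of `f` over a ball of radius `2 * K * ‖h‖`. Integrating against the Gagliardo kernel
and exchanging the order of integration yields the Gagliardo estimate with the factor
`(2 * K) ^ r`.

For `0 < θ < 1` the Plancherel theorem turns the Gagliardo energy with `p = 2` into the Sobolev
energy times a constant, because its Fourier multiplier is rotation invariant and homogeneous of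
degree `2 * θ`. That constant cancels from the estimate, so the bound stays uniform as `θ → 1` and
the endpoint `θ = 1` follows by Fatou's lemma and dominated convergence; `θ = 0` is the Plancherel
theorem itself.
-/

noncomputable section

open Module (finrank)
open Metric Filter Real
open scoped FourierTransform NNReal Topology

section Averaging

variable {X F : Type*} [PseudoMetricSpace X] [MeasurableSpace X] [NormedAddCommGroup F]

lemma measure_ball_mul_enorm_sub_rpow_le {μ : Measure X} {f : X → F} (hf : StronglyMeasurable f)
    {p : ℝ} (hp : 1 ≤ p) {u v : X} {t : ℝ} (huv : dist u v ≤ t) :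
    μ (ball v t) * ‖f u - f v‖ₑ ^ p ≤
      2 ^ (p - 1) * ((∫⁻ y in ball u (2 * t), ‖f y - f u‖ₑ ^ p ∂μ) +
        ∫⁻ y in ball v (2 * t), ‖f y - f v‖ₑ ^ p ∂μ) := by
  have hmeas (w : X) : Measurable fun y => ‖f y - f w‖ₑ ^ p :=
    (hf.sub stronglyMeasurable_const).enorm.pow_const p
  have hsub_u : ball v t ⊆ ball u (2 * t) :=
    ball_subset_ball' (by rw [dist_comm]; linarith)
  have hsub_v : ball v t ⊆ ball v (2 * t) :=
    ball_subset_ball (by linarith [dist_nonneg.trans huv])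
  have hpt (y : X) :
      ‖f u - f v‖ₑ ^ p ≤ 2 ^ (p - 1) * (‖f y - f u‖ₑ ^ p + ‖f y - f v‖ₑ ^ p) := by
    refine le_trans ?_ (ENNReal.rpow_add_le_mul_rpow_add_rpow _ _ hp)
    gcongr
    calc ‖f u - f v‖ₑ = ‖(f y - f v) - (f y - f u)‖ₑ := by congr 1; abel
      _ ≤ ‖f y - f u‖ₑ + ‖f y - f v‖ₑ := by rw [add_comm]; exact enorm_sub_le
  calc μ (ball v t) * ‖f u - f v‖ₑ ^ p
      = ∫⁻ _ in ball v t, ‖f u - f v‖ₑ ^ p ∂μ := by rw [setLIntegral_const, mul_comm]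
    _ ≤ ∫⁻ y in ball v t, 2 ^ (p - 1) * (‖f y - f u‖ₑ ^ p + ‖f y - f v‖ₑ ^ p) ∂μ :=
        lintegral_mono hpt
    _ = 2 ^ (p - 1) * ((∫⁻ y in ball v t, ‖f y - f u‖ₑ ^ p ∂μ) +
          ∫⁻ y in ball v t, ‖f y - f v‖ₑ ^ p ∂μ) := by
        rw [lintegral_const_mul _ (by exact (hmeas u).add (hmeas v)), lintegral_add_left (hmeas u)]
    _ ≤ _ := by gcongr

end Averaging

section Translation

variable {E F : Type*} [NormedAddCommGroup E] [MeasurableSpace E] [NormedAddCommGroup F]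

/-- The `p`-th power of the `L^p` modulus of continuity of `f` at the increment `h`. -/
def translationEnergy (μ : Measure E) (p : ℝ) (f : E → F) (h : E) : ℝ≥0∞ :=
  ∫⁻ x, ‖f (x + h) - f x‖ₑ ^ p ∂μ

/-- The `p`-th power of a Gagliardo seminorm, written as an integral over increments. The exponent
`s` is that of the whole kernel, so the seminorm of order `r` on `ℝ^d` has `s = r * p + d`. -/
def gagliardoEnergy (μ : Measure E) (p s : ℝ) (f : E → F) : ℝ≥0∞ :=
  ∫⁻ h, ‖h‖ₑ ^ (-s) * translationEnergy μ p f h ∂μ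

variable [BorelSpace E] {μ : Measure E}

lemma measure_ball_eq_measure_ball_zero [μ.IsAddLeftInvariant] (u : E) (t : ℝ) :
    μ (ball u t) = μ (ball 0 t) := by
  rw [← measure_preimage_add μ u, preimage_add_ball, sub_self]

lemma setLIntegral_ball_eq_setLIntegral_ball_zero [μ.IsAddLeftInvariant] (G : E → ℝ≥0∞)
    (u : E) (t : ℝ) : ∫⁻ y in ball u t, G y ∂μ = ∫⁻ z in ball 0 t, G (u + z) ∂μ := by
  rw [← (measurePreserving_add_left μ u).setLIntegral_comp_preimage_emb
    (MeasurableEquiv.addLeft u).measurableEmbedding, preimage_add_ball, sub_self]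

variable [SecondCountableTopology E] {f : E → F} {Φ : E → E} {K : ℝ≥0} {p : ℝ}

lemma measurable_enorm_add_sub_rpow (hf : StronglyMeasurable f) (p : ℝ) :
    Measurable fun q : E × E => ‖f (q.1 + q.2) - f q.1‖ₑ ^ p :=
  ((hf.comp_measurable (measurable_fst.add measurable_snd)).sub
    (hf.comp_measurable measurable_fst)).enorm.pow_const p

variable [SFinite μ]

lemma measurable_translationEnergy (hf : StronglyMeasurable f) (p : ℝ) :
    Measurable (translationEnergy μ p f) :=
  (measurable_enorm_add_sub_rpow hf p).lintegral_prod_left'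

lemma measure_ball_mul_translationEnergy_comp_le [μ.IsAddLeftInvariant]
    (hf : StronglyMeasurable f) (hΦ : MeasurePreserving Φ μ μ) (hK : LipschitzWith K Φ)
    (hp : 1 ≤ p) (h : E) :
    μ (ball 0 (K * ‖h‖)) * translationEnergy μ p (f ∘ Φ) h ≤
      2 ^ p * ∫⁻ z in ball 0 (2 * (K * ‖h‖)), translationEnergy μ p f z ∂μ := by
  set t : ℝ := K * ‖h‖
  set A : E → ℝ≥0∞ := fun u => ∫⁻ z in ball 0 (2 * t), ‖f (u + z) - f u‖ₑ ^ p ∂μ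
  have hA : Measurable A := (measurable_enorm_add_sub_rpow hf p).lintegral_prod_right'
  have hAΦ : Measurable fun x => A (Φ x) := hA.comp hΦ.measurable
  have hpt (x : E) : μ (ball 0 t) * ‖f (Φ (x + h)) - f (Φ x)‖ₑ ^ p ≤
      2 ^ (p - 1) * (A (Φ (x + h)) + A (Φ x)) := by
    have hdist : dist (Φ (x + h)) (Φ x) ≤ t := by simpa using hK.dist_le_mul (x + h) x
    have := measure_ball_mul_enorm_sub_rpow_le (μ := μ) hf hp hdist
    simpa only [setLIntegral_ball_eq_setLIntegral_ball_zero _ (Φ _),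
      measure_ball_eq_measure_ball_zero (Φ _), add_sub_cancel_left] using this
  have hshift : ∫⁻ x, A (Φ (x + h)) ∂μ = ∫⁻ x, A x ∂μ := by
    rw [lintegral_add_right_eq_self (fun x => A (Φ x)) h, hΦ.lintegral_comp hA]
  calc μ (ball 0 t) * translationEnergy μ p (f ∘ Φ) h
      ≤ ∫⁻ x, μ (ball 0 t) * ‖f (Φ (x + h)) - f (Φ x)‖ₑ ^ p ∂μ := lintegral_const_mul_le _ _
    _ ≤ ∫⁻ x, 2 ^ (p - 1) * (A (Φ (x + h)) + A (Φ x)) ∂μ := lintegral_mono hpt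
    _ = 2 ^ (p - 1) * (2 * ∫⁻ x, A x ∂μ) := by
        rw [lintegral_const_mul _ (by exact (hAΦ.comp (measurable_add_const h)).add hAΦ),
          lintegral_add_right _ hAΦ, hshift, hΦ.lintegral_comp hA, two_mul]
    _ = 2 ^ p * ∫⁻ x, A x ∂μ := by
        rw [← mul_assoc]
        congr 1
        nth_rw 2 [← ENNReal.rpow_one 2]
        rw [← ENNReal.rpow_add _ _ two_ne_zero ofNat_ne_top, sub_add_cancel]
    _ = 2 ^ p * ∫⁻ z in ball 0 (2 * t), translationEnergy μ p f z ∂μ := by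
        rw [lintegral_lintegral_swap (measurable_enorm_add_sub_rpow hf p).aemeasurable]
        rfl

end Translation

section Haar

variable {E F : Type*} [NormedAddCommGroup E] [NormedSpace ℝ E] [FiniteDimensional ℝ E]
  [MeasurableSpace E] [BorelSpace E] [NormedAddCommGroup F] (μ : Measure E) [μ.IsAddHaarMeasure]

lemma lintegral_comp_smul (f : E → ℝ≥0∞) {c : ℝ} (hc : c ≠ 0) :
    ∫⁻ x, f (c • x) ∂μ = ‖c‖ₑ ^ (-(finrank ℝ E : ℝ)) * ∫⁻ x, f x ∂μ := by
  have hmap := Measure.map_addHaar_smul μ hc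
  have hconst : ENNReal.ofReal |(c ^ finrank ℝ E)⁻¹| = ‖c‖ₑ ^ (-(finrank ℝ E : ℝ)) := by
    rw [← Real.enorm_eq_ofReal_abs, enorm_inv (pow_ne_zero _ hc), enorm_pow, ENNReal.rpow_neg,
      ENNReal.rpow_natCast]
  rw [← hconst, ← smul_eq_mul, ← lintegral_smul_measure, ← hmap]
  exact (lintegral_map_equiv f (MeasurableEquiv.smul₀ c hc)).symm

variable {μ} in
lemma enorm_rpow_mul_translationEnergy_comp_le {f : E → F} (hf : StronglyMeasurable f) {Φ : E → E}
    (hΦ : MeasurePreserving Φ μ μ) {K : ℝ≥0} (hK0 : K ≠ 0) (hK : LipschitzWith K Φ) {p : ℝ}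
    (hp : 1 ≤ p) (s : ℝ) {h : E} (hh : h ≠ 0) :
    ‖h‖ₑ ^ (-s) * translationEnergy μ p (f ∘ Φ) h ≤
      2 ^ p * K ^ (-(finrank ℝ E : ℝ)) * (μ (ball 0 1))⁻¹ * (‖h‖ₑ ^ (-(s + finrank ℝ E)) *
        ∫⁻ z in ball 0 (2 * K * ‖h‖), translationEnergy μ p f z ∂μ) := by
  set d : ℝ := (finrank ℝ E : ℝ)
  set V := μ (ball (0 : E) 1)
  have hV : V⁻¹ * V = 1 :=
    ENNReal.inv_mul_cancel (measure_ball_pos μ _ one_pos).ne' measure_ball_lt_top.ne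
  have hKK : (K : ℝ≥0∞) ^ (-d) * K ^ d = 1 := by
    rw [← ENNReal.rpow_add _ _ (by simpa using hK0) coe_ne_top, neg_add_cancel, ENNReal.rpow_zero]
  have hhh : ‖h‖ₑ ^ (-(s + d)) * ‖h‖ₑ ^ d = ‖h‖ₑ ^ (-s) := by
    rw [← ENNReal.rpow_add _ _ (enorm_ne_zero.2 hh) enorm_ne_top, neg_add, neg_add_cancel_right]
  have hball : μ (ball 0 (K * ‖h‖)) = K ^ d * ‖h‖ₑ ^ d * V := by
    rw [Measure.addHaar_ball_of_pos μ _ (by positivity), ENNReal.ofReal_pow (by positivity),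
      ENNReal.ofReal_mul K.coe_nonneg, ofReal_coe_nnreal, ofReal_norm, ← ENNReal.rpow_natCast,
      ENNReal.mul_rpow_of_nonneg _ _ (Nat.cast_nonneg _)]
  have hcore := measure_ball_mul_translationEnergy_comp_le hf hΦ hK hp h
  rw [hball, ← mul_assoc 2 (K : ℝ)] at hcore
  set I := ∫⁻ z in ball 0 (2 * K * ‖h‖), translationEnergy μ p f z ∂μ
  set J := translationEnergy μ p (f ∘ Φ) h
  calc ‖h‖ₑ ^ (-s) * J
      = (K ^ (-d) * K ^ d) * (V⁻¹ * V) * (‖h‖ₑ ^ (-(s + d)) * ‖h‖ₑ ^ d) * J := by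
        rw [hKK, hhh, hV, one_mul, one_mul]
    _ = K ^ (-d) * V⁻¹ * ‖h‖ₑ ^ (-(s + d)) * (K ^ d * ‖h‖ₑ ^ d * V * J) := by ring
    _ ≤ K ^ (-d) * V⁻¹ * ‖h‖ₑ ^ (-(s + d)) * (2 ^ p * I) := by gcongr
    _ = 2 ^ p * K ^ (-d) * V⁻¹ * (‖h‖ₑ ^ (-(s + d)) * I) := by ring

variable [Nontrivial E]

lemma lintegral_fun_norm_addHaar {G : ℝ → ℝ≥0∞} (hG : Measurable G) :
    ∫⁻ x, G ‖x‖ ∂μ = finrank ℝ E * μ (ball 0 1) *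
      ∫⁻ y in Set.Ioi (0 : ℝ), ENNReal.ofReal (y ^ (finrank ℝ E - 1)) * G y := by
  have hG' : Measurable fun y : Set.Ioi (0 : ℝ) => G y := hG.comp measurable_subtype_coe
  calc ∫⁻ x, G ‖x‖ ∂μ = ∫⁻ x : ({0}ᶜ : Set E), G ‖x.1‖ ∂(μ.comap (↑)) := by
        rw [lintegral_subtype_comap (measurableSet_singleton _).compl fun x => G ‖x‖,
          restrict_compl_singleton]
    _ = ∫⁻ q, 1 * G q.2 ∂μ.toSphere.prod (.volumeIoiPow (finrank ℝ E - 1)) := by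
        rw [← μ.measurePreserving_homeomorphUnitSphereProd.lintegral_comp_emb
          (Homeomorph.measurableEmbedding _)]
        simp only [homeomorphUnitSphereProd_apply_snd_coe, one_mul]
    _ = μ.toSphere Set.univ *
          ∫⁻ y : Set.Ioi (0 : ℝ), G y ∂Measure.volumeIoiPow (finrank ℝ E - 1) := by
        rw [lintegral_prod_mul aemeasurable_const hG'.aemeasurable, lintegral_one]
    _ = _ := by
        rw [Measure.volumeIoiPow, lintegral_withDensity_eq_lintegral_mul _ (by fun_prop) hG',
          μ.toSphere_apply_univ]
        congr 1
        exact lintegral_subtype_comap measurableSet_Ioi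
          fun y : ℝ => ENNReal.ofReal (y ^ (finrank ℝ E - 1)) * G y

lemma setLIntegral_compl_closedBall_fun_norm {G : ℝ → ℝ≥0∞} (hG : Measurable G) {ρ : ℝ}
    (hρ : 0 ≤ ρ) :
    ∫⁻ x in (closedBall (0 : E) ρ)ᶜ, G ‖x‖ ∂μ = finrank ℝ E * μ (ball 0 1) *
      ∫⁻ y in Set.Ioi ρ, ENNReal.ofReal (y ^ (finrank ℝ E - 1)) * G y := by
  have hset : (closedBall (0 : E) ρ)ᶜ = norm ⁻¹' Set.Ioi ρ := by ext; simp
  have hinter : Set.Ioi ρ ∩ Set.Ioi 0 = Set.Ioi ρ := Set.inter_eq_left.2 (Set.Ioi_subset_Ioi hρ)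
  have hindicator (y : ℝ) : ENNReal.ofReal (y ^ (finrank ℝ E - 1)) * (Set.Ioi ρ).indicator G y =
      (Set.Ioi ρ).indicator (fun y => ENNReal.ofReal (y ^ (finrank ℝ E - 1)) * G y) y := by
    simp only [Set.indicator_mul_right]
  calc ∫⁻ x in (closedBall (0 : E) ρ)ᶜ, G ‖x‖ ∂μ = ∫⁻ x : E, (Set.Ioi ρ).indicator G ‖x‖ ∂μ := by
        rw [← lintegral_indicator measurableSet_closedBall.compl, hset]
        rfl
    _ = _ := by
        rw [lintegral_fun_norm_addHaar μ (hG.indicator measurableSet_Ioi),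
          lintegral_congr hindicator, setLIntegral_indicator measurableSet_Ioi, hinter]

lemma setLIntegral_compl_closedBall_rpow {b ρ : ℝ} (hb : finrank ℝ E < b) (hρ : 0 < ρ) :
    ∫⁻ h in (closedBall (0 : E) ρ)ᶜ, ‖h‖ₑ ^ (-b) ∂μ =
      ENNReal.ofReal (finrank ℝ E / (b - finrank ℝ E)) * μ (ball 0 1) *
        ENNReal.ofReal ρ ^ (finrank ℝ E - b) := by
  set d := finrank ℝ E
  have hd : 1 ≤ d := Module.finrank_pos
  have hpow (y : ℝ) (hy : y ∈ Set.Ioi ρ) :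
      ENNReal.ofReal (y ^ (d - 1)) * ENNReal.ofReal y ^ (-b) =
        ENNReal.ofReal (y ^ (d - 1 - b)) := by
    have hy0 : 0 < y := hρ.trans hy
    rw [ENNReal.ofReal_rpow_of_pos hy0, ← ENNReal.ofReal_mul (by positivity),
      ← Real.rpow_natCast, ← Real.rpow_add hy0, Nat.cast_sub hd, Nat.cast_one, ← sub_eq_add_neg]
  have hradial : ∫⁻ y in Set.Ioi ρ, ENNReal.ofReal (y ^ (d - 1 - b)) =
      ENNReal.ofReal (ρ ^ (d - b) / (b - d)) := by
    have hnonneg : 0 ≤ᵐ[volume.restrict (Set.Ioi ρ)] fun y => y ^ (d - 1 - b) :=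
      (ae_restrict_mem measurableSet_Ioi).mono fun y hy => Real.rpow_nonneg (hρ.trans hy).le _
    rw [← ofReal_integral_eq_lintegral_ofReal
        (integrableOn_Ioi_rpow_of_lt (by linarith) hρ) hnonneg,
      integral_Ioi_rpow_of_lt (by linarith) hρ,
      show (d : ℝ) - 1 - b + 1 = d - b by ring, neg_div, ← div_neg, neg_sub]
  simp_rw [← ofReal_norm]
  rw [setLIntegral_compl_closedBall_fun_norm μ (G := fun y => ENNReal.ofReal y ^ (-b))
      (by fun_prop) hρ.le, setLIntegral_congr_fun measurableSet_Ioi hpow, hradial,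
    ENNReal.ofReal_rpow_of_pos hρ, ENNReal.ofReal_div_of_pos (sub_pos.2 hb),
    ENNReal.ofReal_div_of_pos (sub_pos.2 hb), ENNReal.ofReal_natCast]
  simp only [div_eq_mul_inv]
  ring

lemma setLIntegral_compl_closedBall_div_rpow {b c : ℝ} (hb : finrank ℝ E < b) (hc : 0 < c) {z : E}
    (hz : z ≠ 0) :
    ∫⁻ h in (closedBall (0 : E) (‖z‖ / c))ᶜ, ‖h‖ₑ ^ (-b) ∂μ =
      ENNReal.ofReal (finrank ℝ E / (b - finrank ℝ E)) * μ (ball 0 1) *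
        ENNReal.ofReal c ^ (b - finrank ℝ E) * ‖z‖ₑ ^ (finrank ℝ E - b) := by
  have hinv : (ENNReal.ofReal c)⁻¹ ^ (finrank ℝ E - b) =
      ENNReal.ofReal c ^ (b - finrank ℝ E) := by
    rw [← ENNReal.rpow_neg_one, ← ENNReal.rpow_mul, neg_one_mul, neg_sub]
  rw [setLIntegral_compl_closedBall_rpow μ hb (div_pos (norm_pos_iff.2 hz) hc),
    ENNReal.ofReal_div_of_pos hc, ofReal_norm, div_eq_mul_inv ‖z‖ₑ, ENNReal.mul_rpow_of_ne_zero
      (enorm_ne_zero.2 hz) (ENNReal.inv_ne_zero.2 ENNReal.ofReal_ne_top), hinv]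
  ring

lemma lintegral_rpow_mul_setLIntegral_ball {W : E → ℝ≥0∞} (hW : Measurable W) {b c : ℝ}
    (hb : finrank ℝ E < b) (hc : 0 < c) :
    ∫⁻ h, ‖h‖ₑ ^ (-b) * ∫⁻ z in ball 0 (c * ‖h‖), W z ∂μ ∂μ =
      ENNReal.ofReal (finrank ℝ E / (b - finrank ℝ E)) * μ (ball 0 1) *
        ENNReal.ofReal c ^ (b - finrank ℝ E) *
          ∫⁻ z, ‖z‖ₑ ^ (finrank ℝ E - b) * W z ∂μ := by
  have hset : MeasurableSet {q : E × E | ‖q.2‖ < c * ‖q.1‖} :=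
    measurableSet_lt (by fun_prop) (by fun_prop)
  have hnorm : Measurable fun h : E => ‖h‖ₑ ^ (-b) := measurable_enorm.pow_const _
  set k : E × E → ℝ≥0∞ :=
    {q : E × E | ‖q.2‖ < c * ‖q.1‖}.indicator fun q => ‖q.1‖ₑ ^ (-b) * W q.2
  have hk : Measurable k :=
    ((hnorm.comp measurable_fst).mul (hW.comp measurable_snd)).indicator hset
  have hinner (h : E) : ‖h‖ₑ ^ (-b) * ∫⁻ z in ball 0 (c * ‖h‖), W z ∂μ = ∫⁻ z, k (h, z) ∂μ := by
    rw [← lintegral_const_mul _ hW, ← lintegral_indicator measurableSet_ball]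
    refine lintegral_congr fun z => ?_
    simp only [k, Set.indicator, mem_ball_zero_iff, Set.mem_ofPred_eq]
  have houter (z : E) :
      ∫⁻ h, k (h, z) ∂μ = (∫⁻ h in (closedBall (0 : E) (‖z‖ / c))ᶜ, ‖h‖ₑ ^ (-b) ∂μ) * W z := by
    rw [← lintegral_mul_const _ hnorm, ← lintegral_indicator measurableSet_closedBall.compl]
    refine lintegral_congr fun h => ?_
    simp only [k, Set.indicator, Set.mem_compl_iff, mem_closedBall_zero_iff, not_le,
      Set.mem_ofPred_eq, div_lt_iff₀' hc]
  rw [lintegral_congr hinner, lintegral_lintegral_swap (f := fun h z => k (h, z)) hk.aemeasurable,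
    ← lintegral_const_mul _ (by exact (measurable_enorm.pow_const _).mul hW)]
  refine lintegral_congr_ae ?_
  filter_upwards [compl_mem_ae_iff.2 (measure_singleton (μ := μ) 0)] with z hz
  rw [houter, setLIntegral_compl_closedBall_div_rpow μ hb hc hz, mul_assoc]

variable {μ}

lemma gagliardoEnergy_comp_le_of_pos {f : E → F} (hf : StronglyMeasurable f) {Φ : E → E}
    (hΦ : MeasurePreserving Φ μ μ) {K : ℝ≥0} (hK0 : K ≠ 0) (hK : LipschitzWith K Φ)
    {p s : ℝ} (hp : 1 ≤ p) (hs : 0 < s) :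
    gagliardoEnergy μ p s (f ∘ Φ) ≤
      ENNReal.ofReal (finrank ℝ E / s) * 2 ^ p * K ^ (-(finrank ℝ E : ℝ)) * (2 * K) ^ s *
        gagliardoEnergy μ p s f := by
  set d : ℝ := (finrank ℝ E : ℝ)
  set V := μ (ball (0 : E) 1)
  have hV0 : V ≠ 0 := (measure_ball_pos μ _ one_pos).ne'
  have hV : V⁻¹ * V = 1 := ENNReal.inv_mul_cancel hV0 measure_ball_lt_top.ne
  have hK_rpow : (K : ℝ≥0∞) ^ (-d) ≠ ∞ := rpow_ne_top_of_ne_zero (by simpa using hK0) coe_ne_top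
  have h2K : ENNReal.ofReal (2 * K) = 2 * K := by
    rw [ENNReal.ofReal_mul zero_le_two, ofReal_coe_nnreal, ENNReal.ofReal_ofNat]
  calc gagliardoEnergy μ p s (f ∘ Φ)
      ≤ ∫⁻ h, 2 ^ p * K ^ (-d) * V⁻¹ * (‖h‖ₑ ^ (-(s + d)) *
          ∫⁻ z in ball 0 (2 * K * ‖h‖), translationEnergy μ p f z ∂μ) ∂μ := by
        refine lintegral_mono_ae ?_
        filter_upwards [compl_mem_ae_iff.2 (measure_singleton (μ := μ) 0)] with h hh
        exact enorm_rpow_mul_translationEnergy_comp_le hf hΦ hK0 hK hp s hh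
    _ = 2 ^ p * K ^ (-d) * V⁻¹ * (ENNReal.ofReal (d / s) * V * (2 * K) ^ s *
          gagliardoEnergy μ p s f) := by
        rw [lintegral_const_mul' _ _ (by finiteness),
          lintegral_rpow_mul_setLIntegral_ball μ (measurable_translationEnergy hf p)
            (by linarith) (by positivity),
          add_sub_cancel_right, gagliardoEnergy, sub_add_cancel_right, h2K]
    _ = ENNReal.ofReal (d / s) * 2 ^ p * K ^ (-d) * (2 * K) ^ s * (V⁻¹ * V) *
          gagliardoEnergy μ p s f := by ring
    _ = _ := by rw [hV, mul_one]

theorem gagliardoEnergy_comp_le {f : E → F} (hf : StronglyMeasurable f) {Φ : E → E}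
    (hΦ : MeasurePreserving Φ μ μ) {K : ℝ≥0} (hK0 : K ≠ 0) (hK : LipschitzWith K Φ)
    {p a : ℝ} (hp : 1 ≤ p) (ha : 0 ≤ a) :
    gagliardoEnergy μ p (a + finrank ℝ E) (f ∘ Φ) ≤
      2 ^ (p + finrank ℝ E) * (2 * K) ^ a * gagliardoEnergy μ p (a + finrank ℝ E) f := by
  set d : ℝ := (finrank ℝ E : ℝ)
  have hd : 0 < d := Nat.cast_pos.2 Module.finrank_pos
  have hKK : (K : ℝ≥0∞) ^ (-d) * K ^ d = 1 := by
    rw [← ENNReal.rpow_add _ _ (by simpa using hK0) coe_ne_top, neg_add_cancel, ENNReal.rpow_zero]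
  have h2 : (2 : ℝ≥0∞) ^ p * 2 ^ d = 2 ^ (p + d) :=
    (ENNReal.rpow_add _ _ two_ne_zero ofNat_ne_top).symm
  have h2K : (2 * K : ℝ≥0∞) ^ (a + d) = (2 * K) ^ a * (2 ^ d * K ^ d) := by
    rw [ENNReal.rpow_add_of_nonneg _ _ ha hd.le, ENNReal.mul_rpow_of_nonneg _ _ hd.le]
  have hratio : ENNReal.ofReal (d / (a + d)) ≤ 1 :=
    ENNReal.ofReal_le_one.2 (div_le_one_of_le₀ (by linarith) (by positivity))
  calc gagliardoEnergy μ p (a + d) (f ∘ Φ)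
      ≤ ENNReal.ofReal (d / (a + d)) * 2 ^ p * K ^ (-d) * (2 * K) ^ (a + d) *
          gagliardoEnergy μ p (a + d) f :=
        gagliardoEnergy_comp_le_of_pos hf hΦ hK0 hK hp (by positivity)
    _ ≤ 1 * 2 ^ p * K ^ (-d) * (2 * K) ^ (a + d) * gagliardoEnergy μ p (a + d) f := by gcongr
    _ = (K ^ (-d) * K ^ d) * (2 ^ p * 2 ^ d) * (2 * K) ^ a * gagliardoEnergy μ p (a + d) f := by
        rw [h2K]
        ring
    _ = 2 ^ (p + d) * (2 * K) ^ a * gagliardoEnergy μ p (a + d) f := by rw [h2, hKK, one_mul]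

end Haar

section Fourier

variable {E F : Type*} [NormedAddCommGroup E] [InnerProductSpace ℝ E] [FiniteDimensional ℝ E]
  [MeasurableSpace E] [BorelSpace E] [NormedAddCommGroup F] [InnerProductSpace ℂ F]
  {f : E → F}

lemma continuous_fourier (hf : Integrable f) : Continuous (𝓕 f) :=
  VectorFourier.fourierIntegral_continuous Real.continuous_fourierChar
    (by exact continuous_inner) hf

lemma fourier_comp_add_sub (hf : Integrable f) (h ξ : E) :
    𝓕 (fun x => f (x + h) - f x) ξ = ((𝐞 ⟪h, ξ⟫ : ℂ) - 1) • 𝓕 f ξ := by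
  have hshift : 𝓕 (fun x => f (x + h)) ξ = (𝐞 ⟪h, ξ⟫ : ℂ) • 𝓕 f ξ :=
    congrFun (VectorFourier.fourierIntegral_comp_add_right 𝐞 volume (innerₗ E) f h) ξ
  have hsub : 𝓕 (fun x => f (x + h) - f x) ξ = 𝓕 (fun x => f (x + h)) ξ - 𝓕 f ξ := by
    simp only [Real.fourier_eq, smul_sub]
    exact integral_sub ((Real.fourierIntegral_convergent_iff ξ).2 (hf.comp_add_right h))
      ((Real.fourierIntegral_convergent_iff ξ).2 hf)
  rw [hsub, hshift, sub_smul, one_smul]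

variable [CompleteSpace F]

lemma fourier_toLp_ae_eq_fourier (hf : Integrable f) (hf2 : MemLp f 2) :
    (𝓕 (hf2.toLp f) : Lp F 2 (volume : Measure E)) =ᵐ[volume] 𝓕 f := by
  refine ae_eq_of_integral_contDiff_smul_eq ((Lp.memLp _).locallyIntegrable one_le_two)
    (continuous_fourier hf).locallyIntegrable fun g hg hg_supp => ?_
  have hG_supp : HasCompactSupport (Complex.ofRealCLM ∘ g) := hg_supp.comp_left rfl
  have hG : ContDiff ℝ (⊤ : ℕ∞) (Complex.ofRealCLM ∘ g) := by fun_prop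
  set G := hG_supp.toSchwartzMap hG
  calc ∫ x, g x • (𝓕 (hf2.toLp f) : Lp F 2 (volume : Measure E)) x
      = ((𝓕 (hf2.toLp f) : Lp F 2 (volume : Measure E)) : TemperedDistribution E F) G := by
        rw [Lp.toTemperedDistribution_apply]
        rfl
    _ = ∫ x, (𝓕 G) x • (hf2.toLp f) x := by
        rw [← Lp.fourier_toTemperedDistribution_eq, TemperedDistribution.fourier_apply,
          Lp.toTemperedDistribution_apply]
    _ = ∫ x, 𝓕 (G : E → ℂ) x • f x := by
        refine integral_congr_ae ?_
        filter_upwards [hf2.coeFn_toLp] with x hx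
        rw [hx]
        rfl
    _ = ∫ x, G x • 𝓕 f x := by
        have := VectorFourier.integral_fourierIntegral_smul_eq_flip (L := innerₗ E) (μ := volume)
          (ν := volume) Real.continuous_fourierChar (by exact continuous_inner) G.integrable hf
        rwa [flip_innerₗ] at this

theorem lintegral_enorm_sq_fourier (hf : Integrable f) (hf2 : MemLp f 2) :
    ∫⁻ ξ, ‖𝓕 f ξ‖ₑ ^ 2 = ∫⁻ x, ‖f x‖ₑ ^ 2 := by
  have hnorm : eLpNorm (𝓕 f) 2 volume = eLpNorm f 2 volume := by
    rw [← eLpNorm_congr_ae (fourier_toLp_ae_eq_fourier hf hf2), ← eLpNorm_congr_ae hf2.coeFn_toLp,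
      ← ENNReal.toReal_eq_toReal_iff' (Lp.eLpNorm_ne_top _) (Lp.eLpNorm_ne_top _)]
    exact Lp.norm_fourier_eq (hf2.toLp f)
  have hsq (g : E → F) : ∫⁻ x, ‖g x‖ₑ ^ 2 = eLpNorm g 2 volume ^ 2 := by
    simpa using (eLpNorm_nnreal_pow_eq_lintegral (p := 2) (f := g) (μ := volume) two_ne_zero).symm
  rw [hsq, hsq, hnorm]

lemma translationEnergy_two_eq (hf : Integrable f) (hf2 : MemLp f 2) (h : E) :
    translationEnergy volume 2 f h = ∫⁻ ξ, ‖(𝐞 ⟪h, ξ⟫ : ℂ) - 1‖ₑ ^ 2 * ‖𝓕 f ξ‖ₑ ^ 2 := by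
  have hf2' : MemLp (fun x => f (x + h)) 2 :=
    hf2.comp_measurePreserving (measurePreserving_add_right volume h)
  simp only [translationEnergy, ENNReal.rpow_two, ← mul_pow, ← enorm_smul,
    ← fourier_comp_add_sub hf h]
  exact (lintegral_enorm_sq_fourier ((hf.comp_add_right h).sub hf) (hf2'.sub hf2)).symm

end Fourier

section GagliardoSymbol

variable {E F : Type*} [NormedAddCommGroup E] [InnerProductSpace ℝ E] [FiniteDimensional ℝ E]
  [MeasurableSpace E] [BorelSpace E] [NormedAddCommGroup F] [InnerProductSpace ℂ F]
  [CompleteSpace F]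

/-- The Fourier multiplier that represents the quadratic Gagliardo energy with kernel exponent
`s`, for the Fourier transform with phase `2π⟪x, ξ⟫`. -/
def gagliardoSymbol (s : ℝ) (ξ : E) : ℝ≥0∞ :=
  ∫⁻ h : E, ‖h‖ₑ ^ (-s) * ‖(𝐞 ⟪h, ξ⟫ : ℂ) - 1‖ₑ ^ 2

lemma measurable_enorm_rpow_mul_enorm_fourierChar_sub_one_sq (s : ℝ) :
    Measurable fun q : E × E => ‖q.1‖ₑ ^ (-s) * ‖(𝐞 ⟪q.1, q.2⟫ : ℂ) - 1‖ₑ ^ 2 := by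
  have hchar : Continuous fun q : E × E => (𝐞 ⟪q.1, q.2⟫ : ℂ) - 1 := by fun_prop
  exact (measurable_fst.enorm.pow_const _).mul (hchar.enorm.measurable.pow_const 2)

lemma gagliardoEnergy_two_eq [Nontrivial E] {f : E → F} (hf : Integrable f) (hf2 : MemLp f 2)
    (s : ℝ) :
    gagliardoEnergy volume 2 s f = ∫⁻ ξ, gagliardoSymbol s ξ * ‖𝓕 f ξ‖ₑ ^ 2 := by
  have hkernel := measurable_enorm_rpow_mul_enorm_fourierChar_sub_one_sq (E := E) s
  have hfourier : Measurable fun ξ => ‖𝓕 f ξ‖ₑ ^ 2 :=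
    (continuous_fourier hf).enorm.measurable.pow_const 2
  have hkernel_left (ξ : E) : Measurable fun h : E =>
      ‖h‖ₑ ^ (-s) * ‖(𝐞 ⟪h, ξ⟫ : ℂ) - 1‖ₑ ^ 2 :=
    hkernel.comp (measurable_id.prodMk measurable_const)
  calc gagliardoEnergy volume 2 s f
      = ∫⁻ h, ∫⁻ ξ, ‖h‖ₑ ^ (-s) * ‖(𝐞 ⟪h, ξ⟫ : ℂ) - 1‖ₑ ^ 2 * ‖𝓕 f ξ‖ₑ ^ 2 := by
        refine lintegral_congr_ae ?_
        filter_upwards [compl_mem_ae_iff.2 (measure_singleton (μ := volume) 0)] with h hh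
        have hconst : ‖h‖ₑ ^ (-s) ≠ ∞ := rpow_ne_top_of_ne_zero (enorm_ne_zero.2 hh) enorm_ne_top
        rw [translationEnergy_two_eq hf hf2, ← lintegral_const_mul' _ _ hconst]
        simp only [mul_assoc]
    _ = ∫⁻ ξ, ∫⁻ h, ‖h‖ₑ ^ (-s) * ‖(𝐞 ⟪h, ξ⟫ : ℂ) - 1‖ₑ ^ 2 * ‖𝓕 f ξ‖ₑ ^ 2 :=
        lintegral_lintegral_swap (by
          exact (hkernel.mul (hfourier.comp measurable_snd)).aemeasurable)
    _ = ∫⁻ ξ, gagliardoSymbol s ξ * ‖𝓕 f ξ‖ₑ ^ 2 :=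
        lintegral_congr fun ξ => lintegral_mul_const _ (hkernel_left ξ)

lemma gagliardoSymbol_eq_of_norm_eq (s : ℝ) {ξ η : E} (h : ‖ξ‖ = ‖η‖) :
    gagliardoSymbol s ξ = gagliardoSymbol s η := by
  set R := (Submodule.span ℝ {ξ - η})ᗮ.reflection
  have hR : R ξ = η := Submodule.reflection_sub h
  have hinvariant := R.measurePreserving.lintegral_comp_emb R.toHomeomorph.measurableEmbedding
    fun h => ‖h‖ₑ ^ (-s) * ‖(𝐞 ⟪h, η⟫ : ℂ) - 1‖ₑ ^ 2
  rw [gagliardoSymbol, gagliardoSymbol, ← hinvariant]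
  refine lintegral_congr fun x => ?_
  rw [← hR, R.inner_map_map, R.enorm_map]

lemma gagliardoSymbol_smul (s : ℝ) {c : ℝ} (hc : c ≠ 0) (ξ : E) :
    gagliardoSymbol s (c • ξ) = ‖c‖ₑ ^ (s - finrank ℝ E) * gagliardoSymbol s ξ := by
  have hc0 : ‖c‖ₑ ≠ 0 := enorm_ne_zero.2 hc
  have hcs : ‖c‖ₑ ^ s ≠ ∞ := rpow_ne_top_of_ne_zero hc0 enorm_ne_top
  have hintegrand (h : E) : ‖h‖ₑ ^ (-s) * ‖(𝐞 ⟪h, c • ξ⟫ : ℂ) - 1‖ₑ ^ 2 =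
      ‖c‖ₑ ^ s * (‖c • h‖ₑ ^ (-s) * ‖(𝐞 ⟪c • h, ξ⟫ : ℂ) - 1‖ₑ ^ 2) := by
    rw [enorm_smul, ENNReal.mul_rpow_of_ne_top enorm_ne_top enorm_ne_top, mul_assoc, ← mul_assoc,
      ← ENNReal.rpow_add _ _ hc0 enorm_ne_top, add_neg_cancel, ENNReal.rpow_zero, one_mul,
      real_inner_smul_left, real_inner_smul_right]
  rw [gagliardoSymbol, lintegral_congr hintegrand, lintegral_const_mul' _ _ hcs,
    lintegral_comp_smul volume (fun h => ‖h‖ₑ ^ (-s) * ‖(𝐞 ⟪h, ξ⟫ : ℂ) - 1‖ₑ ^ 2) hc, ← mul_assoc,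
    ← ENNReal.rpow_add _ _ hc0 enorm_ne_top, ← sub_eq_add_neg, gagliardoSymbol]

lemma gagliardoSymbol_ne_zero (s : ℝ) {ξ : E} (hξ : ξ ≠ 0) : gagliardoSymbol s ξ ≠ 0 := by
  intro hzero
  have : Nontrivial E := ⟨ξ, 0, hξ⟩
  have hcont : Continuous fun h : E => (𝐞 ⟪h, ξ⟫ : ℂ) - 1 := by fun_prop
  have hmeas : Measurable fun h : E => ‖h‖ₑ ^ (-s) * ‖(𝐞 ⟪h, ξ⟫ : ℂ) - 1‖ₑ ^ 2 :=
    (measurable_enorm_rpow_mul_enorm_fourierChar_sub_one_sq s).comp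
      (measurable_id.prodMk measurable_const)
  rw [gagliardoSymbol, lintegral_eq_zero_iff hmeas] at hzero
  have hae : (fun h : E => (𝐞 ⟪h, ξ⟫ : ℂ) - 1) =ᵐ[volume] fun _ => 0 := by
    filter_upwards [hzero, compl_mem_ae_iff.2 (measure_singleton (μ := volume) 0)] with h hh hh0
    have hpow : ‖h‖ₑ ^ (-s) ≠ 0 := (ENNReal.rpow_pos (enorm_pos.2 hh0) enorm_ne_top).ne'
    simpa [hpow] using hh
  have hone := congrFun ((hcont.ae_eq_iff_eq volume continuous_const).1 hae)
    ((2 * ‖ξ‖ ^ 2)⁻¹ • ξ)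
  have hinner : ⟪(2 * ‖ξ‖ ^ 2)⁻¹ • ξ, ξ⟫ = 2⁻¹ := by
    have := norm_ne_zero_iff.2 hξ
    rw [real_inner_smul_left, real_inner_self_eq_norm_sq]
    field_simp
  have hneg : (𝐞 2⁻¹ : ℂ) = -1 := by
    rw [Real.fourierChar_apply, ← Complex.exp_pi_mul_I]
    congr 2
    push_cast
    ring
  rw [hinner, hneg] at hone
  norm_num at hone

lemma enorm_fourierChar_sub_one_le (x : ℝ) : ‖(𝐞 x : ℂ) - 1‖ₑ ≤ ENNReal.ofReal (2 * π) * ‖x‖ₑ := by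
  calc ‖(𝐞 x : ℂ) - 1‖ₑ = ‖Complex.exp (Complex.I * (2 * π * x : ℝ)) - 1‖ₑ := by
        rw [Real.fourierChar_apply, mul_comm]
    _ ≤ ‖2 * π * x‖ₑ := Real.enorm_exp_I_mul_ofReal_sub_one_le
    _ = ENNReal.ofReal (2 * π) * ‖x‖ₑ := by
        rw [enorm_mul, Real.enorm_of_nonneg Real.two_pi_pos.le]

lemma setLIntegral_ball_rpow_lt_top [Nontrivial E] {a : ℝ} (ha : a < finrank ℝ E) (r : ℝ) :
    ∫⁻ h in ball (0 : E) r, ‖h‖ₑ ^ (-a) < ∞ := by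
  have hint : IntegrableOn (fun h : E => ‖h‖ ^ (-a)) (ball 0 r) :=
    integrableOn_ball_of_norm_le_rpow Module.finrank_pos ha (C := 1)
      (Eventually.of_forall fun h => by simp [abs_of_nonneg (Real.rpow_nonneg (norm_nonneg h) _)])
      (measurable_norm.pow_const (-a)).aestronglyMeasurable
  refine lt_of_eq_of_lt (lintegral_congr_ae (ae_restrict_of_ae ?_)) hint.lintegral_lt_top
  filter_upwards [compl_mem_ae_iff.2 (measure_singleton (μ := volume) 0)] with h hh
  rw [← ENNReal.ofReal_rpow_of_pos (norm_pos_iff.2 hh), ofReal_norm]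

lemma setLIntegral_ball_gagliardoSymbol_lt_top [Nontrivial E] {s : ℝ} (hs : s < finrank ℝ E + 2)
    (ξ : E) (r : ℝ) :
    ∫⁻ h in ball (0 : E) r, ‖h‖ₑ ^ (-s) * ‖(𝐞 ⟪h, ξ⟫ : ℂ) - 1‖ₑ ^ 2 < ∞ := by
  have hinner (h : E) : ‖⟪h, ξ⟫‖ₑ ≤ ‖h‖ₑ * ‖ξ‖ₑ := by
    simp only [← ofReal_norm, ← ENNReal.ofReal_mul (norm_nonneg h)]
    exact ENNReal.ofReal_le_ofReal (norm_inner_le_norm h ξ)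
  calc ∫⁻ h in ball (0 : E) r, ‖h‖ₑ ^ (-s) * ‖(𝐞 ⟪h, ξ⟫ : ℂ) - 1‖ₑ ^ 2
      ≤ ∫⁻ h in ball (0 : E) r, (ENNReal.ofReal (2 * π) * ‖ξ‖ₑ) ^ 2 * ‖h‖ₑ ^ (-(s - 2)) := by
        refine lintegral_mono_ae (ae_restrict_of_ae ?_)
        filter_upwards [compl_mem_ae_iff.2 (measure_singleton (μ := volume) 0)] with h hh
        calc ‖h‖ₑ ^ (-s) * ‖(𝐞 ⟪h, ξ⟫ : ℂ) - 1‖ₑ ^ 2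
            ≤ ‖h‖ₑ ^ (-s) * (ENNReal.ofReal (2 * π) * (‖h‖ₑ * ‖ξ‖ₑ)) ^ 2 := by
              gcongr
              exact (enorm_fourierChar_sub_one_le _).trans (by gcongr; exact hinner h)
          _ = (ENNReal.ofReal (2 * π) * ‖ξ‖ₑ) ^ 2 * (‖h‖ₑ ^ (-s) * ‖h‖ₑ ^ (2 : ℝ)) := by
              rw [ENNReal.rpow_two]
              ring
          _ = (ENNReal.ofReal (2 * π) * ‖ξ‖ₑ) ^ 2 * ‖h‖ₑ ^ (-(s - 2)) := by
              rw [← ENNReal.rpow_add _ _ (enorm_ne_zero.2 hh) enorm_ne_top, neg_sub,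
                neg_add_eq_sub]
    _ < ∞ := by
        rw [lintegral_const_mul' _ _ (by finiteness)]
        exact mul_lt_top (by finiteness) (setLIntegral_ball_rpow_lt_top (by linarith) r)

lemma setLIntegral_compl_closedBall_gagliardoSymbol_lt_top [Nontrivial E] {s : ℝ}
    (hs : finrank ℝ E < s) (ξ : E) {r : ℝ} (hr : 0 < r) :
    ∫⁻ h in (closedBall (0 : E) r)ᶜ, ‖h‖ₑ ^ (-s) * ‖(𝐞 ⟪h, ξ⟫ : ℂ) - 1‖ₑ ^ 2 < ∞ := by
  calc ∫⁻ h in (closedBall (0 : E) r)ᶜ, ‖h‖ₑ ^ (-s) * ‖(𝐞 ⟪h, ξ⟫ : ℂ) - 1‖ₑ ^ 2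
      ≤ ∫⁻ h in (closedBall (0 : E) r)ᶜ, ‖h‖ₑ ^ (-s) * 2 ^ 2 := by
        gcongr with h
        calc ‖(𝐞 ⟪h, ξ⟫ : ℂ) - 1‖ₑ ≤ ‖(𝐞 ⟪h, ξ⟫ : ℂ)‖ₑ + ‖(1 : ℂ)‖ₑ := enorm_sub_le
          _ = 2 := by
            rw [← ofReal_norm, Circle.norm_coe, enorm_one, ofReal_one, one_add_one_eq_two]
    _ < ∞ := by
        have hr0 : ENNReal.ofReal r ^ (finrank ℝ E - s) ≠ ∞ :=
          rpow_ne_top_of_ne_zero (ENNReal.ofReal_pos.2 hr).ne' ofReal_ne_top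
        rw [lintegral_mul_const' _ _ (by finiteness),
          setLIntegral_compl_closedBall_rpow volume hs hr]
        exact mul_lt_top (by finiteness) (by finiteness)

lemma gagliardoSymbol_lt_top [Nontrivial E] {s : ℝ} (hs : finrank ℝ E < s)
    (hs2 : s < finrank ℝ E + 2) (ξ : E) : gagliardoSymbol s ξ < ∞ := by
  rw [gagliardoSymbol, ← lintegral_add_compl _ (measurableSet_closedBall (x := 0) (ε := 1))]
  refine add_lt_top.2 ⟨lt_of_le_of_lt ?_ (setLIntegral_ball_gagliardoSymbol_lt_top hs2 ξ 2),
    setLIntegral_compl_closedBall_gagliardoSymbol_lt_top hs ξ one_pos⟩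
  exact lintegral_mono_set (closedBall_subset_ball one_lt_two)

lemma exists_gagliardoSymbol_eq [Nontrivial E] {s : ℝ} (hs : finrank ℝ E < s)
    (hs2 : s < finrank ℝ E + 2) :
    ∃ c : ℝ≥0∞, c ≠ 0 ∧ c ≠ ∞ ∧
      ∀ ξ : E, gagliardoSymbol s ξ = c * ‖ξ‖ₑ ^ (s - finrank ℝ E) := by
  obtain ⟨e, he⟩ := exists_norm_eq E zero_le_one
  refine ⟨gagliardoSymbol s e, gagliardoSymbol_ne_zero s (norm_ne_zero_iff.1 (he ▸ one_ne_zero)),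
    (gagliardoSymbol_lt_top hs hs2 e).ne, fun ξ => ?_⟩
  obtain rfl | hξ := eq_or_ne ξ 0
  · simp [gagliardoSymbol, ENNReal.zero_rpow_of_pos (sub_pos.2 hs)]
  · have hnorm : ‖ξ‖ = ‖‖ξ‖ • e‖ := by rw [norm_smul, he, norm_norm, mul_one]
    rw [gagliardoSymbol_eq_of_norm_eq s hnorm, gagliardoSymbol_smul s (norm_ne_zero_iff.2 hξ),
      enorm_norm, mul_comm]

end GagliardoSymbol

section Sobolev

variable {E F : Type*} [NormedAddCommGroup E] [InnerProductSpace ℝ E] [FiniteDimensional ℝ E]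
  [MeasurableSpace E] [BorelSpace E] [NormedAddCommGroup F] [InnerProductSpace ℂ F]
  {f g : E → F} {θ : ℝ}

/-- The square of the homogeneous Sobolev seminorm of order `θ`, up to normalization, for the
Fourier transform with phase `2π⟪x, ξ⟫`. -/
def sobolevEnergy (θ : ℝ) (f : E → F) : ℝ≥0∞ :=
  ∫⁻ ξ, ‖ξ‖ₑ ^ (2 * θ) * ‖𝓕 f ξ‖ₑ ^ 2

lemma sobolevEnergy_congr_ae (h : f =ᵐ[volume] g) (θ : ℝ) :
    sobolevEnergy θ f = sobolevEnergy θ g := by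
  have hfourier : 𝓕 f = 𝓕 g := funext fun ξ => by
    rw [Real.fourier_eq, Real.fourier_eq]
    refine integral_congr_ae ?_
    filter_upwards [h] with x hx
    rw [hx]
  rw [sobolevEnergy, sobolevEnergy, hfourier]

lemma sobolevEnergy_zero_eq [CompleteSpace F] (hf : Integrable f) (hf2 : MemLp f 2) :
    sobolevEnergy 0 f = ∫⁻ x, ‖f x‖ₑ ^ 2 := by
  simp only [sobolevEnergy, mul_zero, ENNReal.rpow_zero, one_mul, lintegral_enorm_sq_fourier hf hf2]

lemma sobolevEnergy_zero_comp [CompleteSpace F] (hf : Integrable f) (hf2 : MemLp f 2)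
    {Φ : E → E} (hΦ : MeasurePreserving Φ volume volume) :
    sobolevEnergy 0 (f ∘ Φ) = sobolevEnergy 0 f := by
  have hmeas : AEMeasurable (fun x => ‖f x‖ₑ ^ 2) := hf.1.enorm.pow_const 2
  rw [sobolevEnergy_zero_eq hf hf2,
    sobolevEnergy_zero_eq (hΦ.integrable_comp_of_integrable hf) (hf2.comp_measurePreserving hΦ)]
  rw [← hΦ.map_eq] at hmeas
  exact (lintegral_map' hmeas hΦ.aemeasurable).symm.trans (by rw [hΦ.map_eq])

lemma measurable_enorm_rpow_mul_enorm_fourier_sq (hf : Integrable f) (θ : ℝ) :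
    Measurable fun ξ => ‖ξ‖ₑ ^ (2 * θ) * ‖𝓕 f ξ‖ₑ ^ 2 :=
  (measurable_enorm.pow_const _).mul ((continuous_fourier hf).enorm.measurable.pow_const 2)

lemma continuousAt_ennreal_const_rpow {a : ℝ≥0∞} (h0 : a ≠ 0) (htop : a ≠ ∞) (b : ℝ) :
    ContinuousAt (fun t : ℝ => a ^ t) b := by
  lift a to ℝ≥0 using htop
  have ha : a ≠ 0 := by simpa using h0
  simp only [← ENNReal.coe_rpow_of_ne_zero ha]
  exact ENNReal.continuous_coe.continuousAt.comp
    ((NNReal.continuousAt_rpow (.inl ha)).comp (by fun_prop : ContinuousAt (fun t : ℝ => (a, t)) b))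

lemma tendsto_enorm_rpow_mul_enorm_fourier_sq (f : E → F) (θ : ℝ) {ξ : E} (hξ : ξ ≠ 0) :
    Tendsto (fun t : ℝ => ‖ξ‖ₑ ^ (2 * t) * ‖𝓕 f ξ‖ₑ ^ 2) (𝓝[<] θ)
      (𝓝 (‖ξ‖ₑ ^ (2 * θ) * ‖𝓕 f ξ‖ₑ ^ 2)) := by
  have hrpow : Tendsto (fun t : ℝ => ‖ξ‖ₑ ^ (2 * t)) (𝓝[<] θ) (𝓝 (‖ξ‖ₑ ^ (2 * θ))) :=
    ((continuousAt_ennreal_const_rpow (enorm_ne_zero.2 hξ) enorm_ne_top (2 * θ)).comp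
      (continuous_const_mul 2).continuousAt).mono_left nhdsWithin_le_nhds
  exact ENNReal.Tendsto.mul_const hrpow (.inr (by finiteness))

variable [Nontrivial E]

lemma sobolevEnergy_le_liminf (hf : Integrable f) (θ : ℝ) :
    sobolevEnergy θ f ≤ liminf (fun t => sobolevEnergy t f) (𝓝[<] θ) := by
  calc sobolevEnergy θ f
      = ∫⁻ ξ, liminf (fun t : ℝ => ‖ξ‖ₑ ^ (2 * t) * ‖𝓕 f ξ‖ₑ ^ 2) (𝓝[<] θ) := by
        refine lintegral_congr_ae ?_
        filter_upwards [compl_mem_ae_iff.2 (measure_singleton (μ := volume) 0)] with ξ hξ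
        exact (tendsto_enorm_rpow_mul_enorm_fourier_sq f θ hξ).liminf_eq.symm
    _ ≤ liminf (fun t => sobolevEnergy t f) (𝓝[<] θ) :=
        lintegral_liminf_le fun t => measurable_enorm_rpow_mul_enorm_fourier_sq hf t

lemma tendsto_sobolevEnergy (hf : Integrable f) (hθ : 0 < θ) (h0 : sobolevEnergy 0 f ≠ ∞)
    (htop : sobolevEnergy θ f ≠ ∞) :
    Tendsto (fun t => sobolevEnergy t f) (𝓝[<] θ) (𝓝 (sobolevEnergy θ f)) := by
  have hmeas := measurable_enorm_rpow_mul_enorm_fourier_sq hf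
  refine tendsto_lintegral_filter_of_dominated_convergence
    (fun ξ => ‖ξ‖ₑ ^ (2 * (0 : ℝ)) * ‖𝓕 f ξ‖ₑ ^ 2 + ‖ξ‖ₑ ^ (2 * θ) * ‖𝓕 f ξ‖ₑ ^ 2)
    (Eventually.of_forall hmeas) ?_ ?_ ?_
  · filter_upwards [Ioo_mem_nhdsLT hθ] with t ht
    refine Eventually.of_forall fun ξ => ?_
    rw [← add_mul]
    gcongr
    obtain hξ | hξ := le_total ‖ξ‖ₑ 1
    · exact le_add_right (ENNReal.rpow_le_rpow_of_exponent_ge hξ (by linarith [ht.1]))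
    · exact le_add_left (ENNReal.rpow_le_rpow_of_exponent_le hξ (by linarith [ht.2]))
  · rw [lintegral_add_left (hmeas 0)]
    exact add_ne_top.2 ⟨h0, htop⟩
  · filter_upwards [compl_mem_ae_iff.2 (measure_singleton (μ := volume) 0)] with ξ hξ
    exact tendsto_enorm_rpow_mul_enorm_fourier_sq f θ hξ

lemma sobolevEnergy_le_mul_of_forall_lt (hf : Integrable f) (hg : Integrable g) (hθ : 0 < θ)
    (h0 : sobolevEnergy 0 f ≠ ∞) {C : ℝ → ℝ≥0∞} (hC : ContinuousAt C θ) (hC0 : C θ ≠ 0)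
    (hCtop : C θ ≠ ∞)
    (h : ∀ t, 0 < t → t < θ → sobolevEnergy t g ≤ C t * sobolevEnergy t f) :
    sobolevEnergy θ g ≤ C θ * sobolevEnergy θ f := by
  obtain htop | htop := eq_or_ne (sobolevEnergy θ f) ∞
  · rw [htop, ENNReal.mul_top hC0]
    exact le_top
  have hbound : Tendsto (fun t => C t * sobolevEnergy t f) (𝓝[<] θ) (𝓝 (C θ * sobolevEnergy θ f)) :=
    ENNReal.Tendsto.mul (hC.mono_left nhdsWithin_le_nhds) (.inr htop)
      (tendsto_sobolevEnergy hf hθ h0 htop) (.inr hCtop)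
  calc sobolevEnergy θ g ≤ liminf (fun t => sobolevEnergy t g) (𝓝[<] θ) :=
        sobolevEnergy_le_liminf hg θ
    _ ≤ liminf (fun t => C t * sobolevEnergy t f) (𝓝[<] θ) := by
        refine liminf_le_liminf ?_
        filter_upwards [Ioo_mem_nhdsLT hθ] with t ht
        exact h t ht.1 ht.2
    _ = C θ * sobolevEnergy θ f := hbound.liminf_eq

variable [CompleteSpace F]

lemma exists_gagliardoEnergy_two_eq_mul_sobolevEnergy (hθ : 0 < θ) (hθ1 : θ < 1) :
    ∃ c : ℝ≥0∞, c ≠ 0 ∧ c ≠ ∞ ∧ ∀ f : E → F, Integrable f → MemLp f 2 →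
      gagliardoEnergy volume 2 (2 * θ + finrank ℝ E) f = c * sobolevEnergy θ f := by
  obtain ⟨c, hc0, hc, hsymbol⟩ := exists_gagliardoSymbol_eq (E := E) (s := 2 * θ + finrank ℝ E)
    (by linarith) (by linarith)
  refine ⟨c, hc0, hc, fun f hf hf2 => ?_⟩
  simp only [gagliardoEnergy_two_eq hf hf2, hsymbol, add_sub_cancel_right, mul_assoc]
  rw [lintegral_const_mul' _ _ hc, sobolevEnergy]

variable {Φ : E → E} {K : ℝ≥0}

lemma sobolevEnergy_comp_le_of_lt_one (hf : Integrable f) (hf2 : MemLp f 2)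
    (hΦ : MeasurePreserving Φ volume volume) (hK0 : K ≠ 0) (hK : LipschitzWith K Φ)
    (hθ : 0 < θ) (hθ1 : θ < 1) :
    sobolevEnergy θ (f ∘ Φ) ≤
      2 ^ (2 + finrank ℝ E : ℝ) * (2 * K) ^ (2 * θ) * sobolevEnergy θ f := by
  set g : E → F := hf.1.mk f
  have hfg : f =ᵐ[volume] g := hf.1.ae_eq_mk
  have hg : Integrable g := hf.congr hfg
  have hg2 : MemLp g 2 := hf2.ae_eq hfg
  obtain ⟨c, hc0, hc, henergy⟩ :=
    exists_gagliardoEnergy_two_eq_mul_sobolevEnergy (E := E) (F := F) hθ hθ1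
  have hcomp := gagliardoEnergy_comp_le hf.1.stronglyMeasurable_mk hΦ hK0 hK one_le_two
    (mul_nonneg zero_le_two hθ.le)
  rw [henergy _ (hΦ.integrable_comp_of_integrable hg) (hg2.comp_measurePreserving hΦ),
    henergy _ hg hg2, mul_left_comm, ENNReal.mul_le_mul_iff_right hc0 hc] at hcomp
  rwa [sobolevEnergy_congr_ae hfg,
    sobolevEnergy_congr_ae (hΦ.quasiMeasurePreserving.ae_eq_comp hfg)]

theorem sobolevEnergy_comp_le (hf : Integrable f) (hf2 : MemLp f 2)
    (hΦ : MeasurePreserving Φ volume volume) (hK0 : K ≠ 0) (hK : LipschitzWith K Φ)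
    (hθ : 0 ≤ θ) (hθ1 : θ ≤ 1) :
    sobolevEnergy θ (f ∘ Φ) ≤
      2 ^ (2 + finrank ℝ E : ℝ) * (2 * K) ^ (2 * θ) * sobolevEnergy θ f := by
  obtain rfl | hθ := hθ.eq_or_lt
  · rw [sobolevEnergy_zero_comp hf hf2 hΦ, mul_zero, ENNReal.rpow_zero, mul_one]
    exact le_mul_of_one_le_left' (ENNReal.one_le_rpow one_le_two (by positivity))
  have hK0' : 2 * (K : ℝ≥0∞) ≠ 0 := mul_ne_zero two_ne_zero (by simpa using hK0)
  have hpow_zero : (2 * K : ℝ≥0∞) ^ (2 * θ) ≠ 0 := by positivity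
  have hpow_top : (2 * K : ℝ≥0∞) ^ (2 * θ) ≠ ∞ := by finiteness
  have hC : ContinuousAt (fun t : ℝ => 2 ^ (2 + finrank ℝ E : ℝ) * (2 * K : ℝ≥0∞) ^ (2 * t)) θ :=
    ENNReal.Tendsto.const_mul ((continuousAt_ennreal_const_rpow hK0' (by finiteness) (2 * θ)).comp
      (continuous_const_mul 2).continuousAt) (.inl hpow_zero)
  have h0 : sobolevEnergy 0 f ≠ ∞ := by
    rw [sobolevEnergy_zero_eq hf hf2]
    simpa using (lintegral_rpow_enorm_lt_top_of_eLpNorm_lt_top two_ne_zero ofNat_ne_top hf2.2).ne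
  exact sobolevEnergy_le_mul_of_forall_lt hf (hΦ.integrable_comp_of_integrable hf) hθ h0 hC
    (by positivity) (by finiteness) fun t ht htθ =>
      sobolevEnergy_comp_le_of_lt_one hf hf2 hΦ hK0 hK ht (htθ.trans_le hθ1)

end Sobolev

section Seminorms

variable {d : ℕ} {F : Type*} [NormedAddCommGroup F] {f : Ed d → F} {Φ : Ed d → Ed d} {K : ℝ≥0}
  {r p θ : ℝ}

lemma enorm_sub_le_holderSemi_mul (f : Ed d → F) (r : ℝ) (x y : Ed d) :
    ‖f x - f y‖ₑ ≤ holderSemi d r f * ‖x - y‖ₑ ^ r := by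
  obtain rfl | hxy := eq_or_ne x y
  · simp
  have hpos : 0 < ‖x - y‖ₑ := enorm_pos.2 (sub_ne_zero.2 hxy)
  rw [← ENNReal.div_le_iff (ENNReal.rpow_pos hpos enorm_ne_top).ne'
    (rpow_ne_top_of_ne_zero hpos.ne' enorm_ne_top)]
  exact le_iSup₂ (f := fun x y => ‖f x - f y‖ₑ / ‖x - y‖ₑ ^ r) x y

lemma holderSemi_comp_le (f : Ed d → F) (hK : LipschitzWith K Φ) (hr : 0 ≤ r) :
    holderSemi d r (f ∘ Φ) ≤ K ^ r * holderSemi d r f := by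
  refine iSup₂_le fun x y => ENNReal.div_le_of_le_mul ?_
  have hdist : ‖Φ x - Φ y‖ₑ ≤ K * ‖x - y‖ₑ := by
    simpa only [edist_eq_enorm_sub] using hK x y
  calc ‖f (Φ x) - f (Φ y)‖ₑ ≤ holderSemi d r f * ‖Φ x - Φ y‖ₑ ^ r :=
        enorm_sub_le_holderSemi_mul f r _ _
    _ ≤ holderSemi d r f * (K * ‖x - y‖ₑ) ^ r := by gcongr
    _ = K ^ r * holderSemi d r f * ‖x - y‖ₑ ^ r := by
        rw [ENNReal.mul_rpow_of_nonneg _ _ hr]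
        ring

lemma gagliardo_eq (hf : StronglyMeasurable f) (r p : ℝ) :
    gagliardo d r p f = gagliardoEnergy volume p (r * p + d) f ^ (1 / p) := by
  have hmeas := measurable_enorm_add_sub_rpow hf p
  set s : ℝ := r * p + d
  have htranslate (x : Ed d) : ∫⁻ y, ‖f x - f y‖ₑ ^ p / ‖x - y‖ₑ ^ s =
      ∫⁻ h, ‖h‖ₑ ^ (-s) * ‖f (x + h) - f x‖ₑ ^ p := by
    rw [← lintegral_add_left_eq_self _ x]
    refine lintegral_congr fun h => ?_
    rw [enorm_sub_rev (f x), sub_add_cancel_left, enorm_neg, ENNReal.rpow_neg, mul_comm,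
      div_eq_mul_inv]
  have hswap : ∫⁻ x, ∫⁻ h, ‖h‖ₑ ^ (-s) * ‖f (x + h) - f x‖ₑ ^ p =
      gagliardoEnergy volume p s f := by
    rw [lintegral_lintegral_swap (by
      exact ((measurable_enorm.comp measurable_snd).pow_const _ |>.mul hmeas).aemeasurable)]
    exact lintegral_congr fun h => lintegral_const_mul _
      (hmeas.comp (measurable_id.prodMk measurable_const))
  rw [gagliardo, ← hswap, ← lintegral_congr htranslate]
  rfl

lemma ftransform_eq_fourier (f : Ed d → ℂ) (κ : Ed d) :
    ftransform d f κ = 𝓕 f ((2 * π)⁻¹ • κ) := by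
  rw [Real.fourier_eq', ftransform]
  refine integral_congr_ae (Eventually.of_forall fun x => ?_)
  have hπ : (π : ℂ) ≠ 0 := Complex.ofReal_ne_zero.2 Real.pi_ne_zero
  simp only [real_inner_smul_right, smul_eq_mul]
  congr 2
  push_cast
  field_simp

lemma sobolevSemi_eq (θ : ℝ) (f : Ed d → ℂ) :
    sobolevSemi d θ f = (ENNReal.ofReal (2 * π) ^ (2 * θ) * sobolevEnergy θ f) ^ ((1 : ℝ) / 2) := by
  have hτ : 0 < 2 * π := Real.two_pi_pos
  set τ := ENNReal.ofReal (2 * π)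
  have hτ0 : τ ≠ 0 := (ENNReal.ofReal_pos.2 hτ).ne'
  have hτ_top : τ ≠ ∞ := ofReal_ne_top
  have hτ_inv : ‖(2 * π)⁻¹‖ₑ = τ⁻¹ := by
    rw [enorm_inv hτ.ne', Real.enorm_of_nonneg hτ.le]
  have hscale (κ : Ed d) : ‖κ‖ₑ ^ (2 * θ) * ‖ftransform d f κ‖ₑ ^ 2 =
      τ ^ (2 * θ) * (‖(2 * π)⁻¹ • κ‖ₑ ^ (2 * θ) * ‖𝓕 f ((2 * π)⁻¹ • κ)‖ₑ ^ 2) := by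
    rw [ftransform_eq_fourier, ← mul_assoc, enorm_smul, hτ_inv,
      ← ENNReal.mul_rpow_of_ne_top hτ_top (by finiteness), ← mul_assoc,
      ENNReal.mul_inv_cancel hτ0 hτ_top, one_mul]
  have henergy : ∫⁻ κ, ‖κ‖ₑ ^ (2 * θ) * ‖ftransform d f κ‖ₑ ^ 2 =
      τ ^ (2 * θ) * (τ ^ (d : ℝ) * sobolevEnergy θ f) := by
    rw [lintegral_congr hscale, lintegral_const_mul' _ _ (rpow_ne_top_of_ne_zero hτ0 hτ_top),
      lintegral_comp_smul volume (fun ξ => ‖ξ‖ₑ ^ (2 * θ) * ‖𝓕 f ξ‖ₑ ^ 2) (inv_ne_zero hτ.ne'),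
      hτ_inv, finrank_euclideanSpace_fin, ENNReal.inv_rpow, ENNReal.rpow_neg, inv_inv,
      sobolevEnergy]
  have hcancel : τ ^ (-(d : ℝ)) * τ ^ (d : ℝ) = 1 := by
    rw [← ENNReal.rpow_add _ _ hτ0 hτ_top, neg_add_cancel, ENNReal.rpow_zero]
  change (ENNReal.ofReal ((2 * π) ^ (-(d : ℝ))) *
    ∫⁻ κ, ‖κ‖ₑ ^ (2 * θ) * ‖ftransform d f κ‖ₑ ^ 2) ^ ((1 : ℝ) / 2) = _
  rw [henergy, ← ENNReal.ofReal_rpow_of_pos hτ, mul_left_comm, ← mul_assoc (τ ^ (-(d : ℝ))),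
    hcancel, one_mul]

lemma rpow_one_div_le_of_le_two_rpow_mul {a b : ℝ≥0∞} {q : ℝ} (hq : 0 < q)
    (h : a ≤ 2 ^ (q + d) * (2 * K) ^ (r * q) * b) :
    a ^ (1 / q) ≤ 2 ^ (1 + d / q) * (2 * K) ^ r * b ^ (1 / q) := by
  have hq' : 0 ≤ 1 / q := by positivity
  calc a ^ (1 / q) ≤ (2 ^ (q + d) * (2 * K) ^ (r * q) * b) ^ (1 / q) := by gcongr
    _ = 2 ^ (1 + d / q) * (2 * K) ^ r * b ^ (1 / q) := by
        rw [ENNReal.mul_rpow_of_nonneg _ _ hq', ENNReal.mul_rpow_of_nonneg _ _ hq',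
          ← ENNReal.rpow_mul, ← ENNReal.rpow_mul]
        congr 3 <;> field_simp

variable [Nontrivial (Ed d)]

lemma gagliardo_comp_le (hf : StronglyMeasurable f) (hΦ : MeasurePreserving Φ volume volume)
    (hK0 : K ≠ 0) (hK : LipschitzWith K Φ) (hr : 0 ≤ r) (hp : 1 ≤ p) :
    gagliardo d r p (f ∘ Φ) ≤ 2 ^ (1 + d / p) * (2 * K) ^ r * gagliardo d r p f := by
  have henergy := gagliardoEnergy_comp_le hf hΦ hK0 hK hp (a := r * p) (by positivity)
  rw [finrank_euclideanSpace_fin] at henergy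
  rw [gagliardo_eq (hf.comp_measurable hΦ.measurable), gagliardo_eq hf]
  exact rpow_one_div_le_of_le_two_rpow_mul (by positivity) henergy

lemma sobolevSemi_comp_le {f : Ed d → ℂ} (hf : Integrable f) (hf2 : MemLp f 2)
    (hΦ : MeasurePreserving Φ volume volume) (hK0 : K ≠ 0) (hK : LipschitzWith K Φ)
    (hθ : 0 ≤ θ) (hθ1 : θ ≤ 1) :
    sobolevSemi d θ (f ∘ Φ) ≤ 2 ^ (1 + d / 2 : ℝ) * (2 * K) ^ θ * sobolevSemi d θ f := by
  rw [sobolevSemi_eq, sobolevSemi_eq]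
  refine rpow_one_div_le_of_le_two_rpow_mul two_pos ?_
  have henergy := sobolevEnergy_comp_le hf hf2 hΦ hK0 hK hθ hθ1
  rw [finrank_euclideanSpace_fin] at henergy
  rw [mul_comm θ, mul_left_comm]
  gcongr

end Seminorms

section Diffeomorphism

variable {d : ℕ} {Φ : Ed d → Ed d} {M : ℝ}

lemma IsMPDiffeo.measurePreserving (h : IsMPDiffeo d Φ M) :
    MeasurePreserving Φ volume volume :=
  ⟨h.1.continuous.measurable, h.2.2.1⟩

lemma IsMPDiffeo.pos (h : IsMPDiffeo d Φ M) : 0 < M :=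
  one_pos.trans_le h.2.2.2.1

lemma IsMPDiffeo.lipschitzWith (h : IsMPDiffeo d Φ M) : LipschitzWith M.toNNReal Φ :=
  lipschitzWith_of_nnnorm_fderiv_le (𝕜 := ℝ) (h.1.differentiable one_ne_zero) fun ξ =>
    NNReal.le_toNNReal_of_coe_le (h.2.2.2.2 ξ)

end Diffeomorphism

lemma two_rpow_mul_two_mul_toNNReal_rpow {M : ℝ} (hM : 0 < M) (b r : ℝ) :
    (2 : ℝ≥0∞) ^ b * (2 * (M.toNNReal : ℝ≥0∞)) ^ r =
      ENNReal.ofReal (2 ^ (b + r)) * ENNReal.ofReal (M ^ r) := by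
  rw [ENNReal.mul_rpow_of_ne_top ofNat_ne_top coe_ne_top, ← mul_assoc,
    ← ENNReal.rpow_add _ _ two_ne_zero ofNat_ne_top, ← ENNReal.ofReal_rpow_of_pos two_pos,
    ← ENNReal.ofReal_rpow_of_pos hM, ENNReal.ofReal_ofNat]
  rfl

theorem stmt15_general (d : ℕ) (hd : 1 ≤ d) {F : Type*} [NormedAddCommGroup F] (Φ : Ed d → Ed d)
    (M : ℝ) (hM : 0 < M) (hLip : LipschitzWith M.toNNReal Φ) :
    (∀ r : ℝ, 0 ≤ r → ∀ f : Ed d → F,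
      holderSemi d r (f ∘ Φ) ≤ ENNReal.ofReal (M ^ r) * holderSemi d r f) ∧
    (MeasurePreserving Φ volume volume → ∀ r p : ℝ, 0 ≤ r → 1 ≤ p →
      ∀ f : Ed d → F, StronglyMeasurable f →
        gagliardo d r p (f ∘ Φ) ≤
          ENNReal.ofReal (2 ^ (1 + d / p + r)) * ENNReal.ofReal (M ^ r) * gagliardo d r p f) ∧
    (MeasurePreserving Φ volume volume → ∀ θ : ℝ, 0 ≤ θ → θ ≤ 1 →
      ∀ f : Ed d → ℂ, Integrable f → MemLp f 2 →
        sobolevSemi d θ (f ∘ Φ) ≤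
          ENNReal.ofReal (2 ^ (1 + d / 2 + θ)) * ENNReal.ofReal (M ^ θ) * sobolevSemi d θ f) := by
  have : Nontrivial (Ed d) := Module.nontrivial_of_finrank_pos (R := ℝ)
    (by rwa [finrank_euclideanSpace_fin])
  have hK0 : M.toNNReal ≠ 0 := (Real.toNNReal_pos.2 hM).ne'
  refine ⟨fun r hr f => ?_, fun hΦ r p hr hp f hf => ?_, fun hΦ θ hθ hθ1 f hf hf2 => ?_⟩
  · rw [← ENNReal.ofReal_rpow_of_pos hM]
    exact holderSemi_comp_le f hLip hr
  · rw [← two_rpow_mul_two_mul_toNNReal_rpow hM]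
    exact gagliardo_comp_le hf hΦ hK0 hLip hr hp
  · rw [← two_rpow_mul_two_mul_toNNReal_rpow hM]
    exact sobolevSemi_comp_le hf hf2 hΦ hK0 hLip hθ hθ1

end

/-- For a measure-preserving `C¹` diffeomorphism `Φ` with
`sup ‖DΦ‖ ≤ M`, `M ≥ 1`, and every Schwartz `g`:
(i) `{g∘Φ}_r ≤ M^r {g}_r` for `0 < r < 1`;
(ii) `[g∘Φ]_{r,p} ≤ C(d,r,p) M^r [g]_{r,p}` for `0 < r < 1`, `2 ≤ p < ∞`;
(iii) `[g∘Φ]_θ ≤ C(d,θ) M^θ [g]_θ` for `0 ≤ θ ≤ 1`;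
with `C` independent of `Φ`, `M` and `g`. -/
theorem stmt15 (d : ℕ) (hd : 1 ≤ d) :
    (∀ (Φ : Ed d → Ed d) (M : ℝ), IsMPDiffeo d Φ M → ∀ r : ℝ, 0 < r → r < 1 →
      ∀ g : SchwartzMap (Ed d) ℝ,
        holderSemi d r (fun ξ => g (Φ ξ)) ≤ ENNReal.ofReal (M ^ r) * holderSemi d r ⇑g) ∧
    (∀ r p : ℝ, 0 < r → r < 1 → 2 ≤ p →
      ∃ C : ℝ, 0 < C ∧ ∀ (Φ : Ed d → Ed d) (M : ℝ), IsMPDiffeo d Φ M →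
        ∀ g : SchwartzMap (Ed d) ℝ,
          gagliardo d r p (fun ξ => g (Φ ξ))
            ≤ ENNReal.ofReal C * ENNReal.ofReal (M ^ r) * gagliardo d r p ⇑g) ∧
    (∀ θ : ℝ, 0 ≤ θ → θ ≤ 1 →
      ∃ C : ℝ, 0 < C ∧ ∀ (Φ : Ed d → Ed d) (M : ℝ), IsMPDiffeo d Φ M →
        ∀ g : SchwartzMap (Ed d) ℝ,
          sobolevSemi d θ (fun ξ => ((g (Φ ξ) : ℝ) : ℂ))
            ≤ ENNReal.ofReal C * ENNReal.ofReal (M ^ θ) *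
                sobolevSemi d θ (fun ξ => ((g ξ : ℝ) : ℂ))) := by
  have comp_le (Φ : Ed d → Ed d) (M : ℝ) (h : IsMPDiffeo d Φ M) :=
    stmt15_general d hd (F := ℝ) Φ M h.pos h.lipschitzWith
  refine ⟨fun Φ M h r hr _ g => ?_,
    fun r p hr _ hp => ⟨2 ^ (1 + d / p + r), by positivity, fun Φ M h g => ?_⟩,
    fun θ hθ hθ1 => ⟨2 ^ (1 + d / 2 + θ), by positivity, fun Φ M h g => ?_⟩⟩
  · exact (comp_le Φ M h).1 r hr.le g
  · exact (comp_le Φ M h).2.1 h.measurePreserving r p hr.le (one_le_two.trans hp) g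
      g.continuous.stronglyMeasurable
  · exact (comp_le Φ M h).2.2 h.measurePreserving θ hθ hθ1 (fun ξ => (g ξ : ℂ))
      g.integrable.ofReal (g.memLp 2).ofReal
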